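/- For every ε > 0 there exists an instance (G,w) of the concurrent graph sharing game, with G a cycle, such that v(G,w) ≤ 1/3 + ε. -/

import Mathlib

/-!
Formalization of the concurrent graph sharing game.

An instance is a finite connected simple graph `G` on a finite vertex type `V`
together with vertex weights `w : V → (0,1]` summing to `1`, such that no two
distinct subsets of vertices have the same total weight.

A game history is recorded as a list of the taken vertices, **most recent
first**.  The player-to-move at a history is determined by the history itself:
the first player (1st) moves when his collected weight so far is at most that
of the second player (2nd); by the distinct-subset-sums assumption a tie occurs
only at the empty history, where indeed 1st begins.  `scores w h` computes the
pair `(w(F), w(S))` of total weights collected by 1st and 2nd along a history.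

A strategy is a function from histories to the chosen next vertex; it is legal
if, whenever some legal move exists (a non-taken vertex that is adjacent to a
taken one, or any vertex at the very beginning), it produces a legal move.
`firstScore w σ τ` is the total weight collected by 1st after the complete play
(all `Fintype.card V` vertices taken) in which 1st uses `σ` and 2nd uses `τ`.

`FirstGuarantees G w c` says that 1st has a legal strategy guaranteeing that he
collects total weight at least `c` against every legal strategy of 2nd, and the
value `gameValue G w` is the supremum of all such guarantees `c`.
-/

namespace ConcurrentSharing

variable {V : Type} [Fintype V]

/-- The pair `(w(F), w(S))` of weights collected by the two players along a
history (most recent vertex first): each vertex is assigned to the player who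
was to move, namely 1st iff his score so far is at most 2nd's score. -/
noncomputable def scores (w : V → ℝ) : List V → ℝ × ℝ
  | [] => (0, 0)
  | v :: h =>
    let p := scores w h
    if p.1 ≤ p.2 then (p.1 + w v, p.2) else (p.1, p.2 + w v)

/-- `v` is a legal next move at history `h`: it is not yet taken, and it is
adjacent to some taken vertex (any vertex is legal at the start). -/
def LegalMove (G : SimpleGraph V) (h : List V) (v : V) : Prop :=
  v ∉ h ∧ (h = [] ∨ ∃ u ∈ h, G.Adj u v)

/-- A strategy (for either player) maps histories to vertices; it is legal if
it produces a legal move whenever a legal move exists. -/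
def LegalStrategy (G : SimpleGraph V) (σ : List V → V) : Prop :=
  ∀ h : List V, (∃ v, LegalMove G h v) → LegalMove G h (σ h)

/-- The history after `n` rounds when 1st plays `σ` and 2nd plays `τ`
(the player to move is the one whose collected weight so far is smaller;
at the start, i.e. on a tie, 1st moves). -/
noncomputable def playAux (w : V → ℝ) (σ τ : List V → V) : ℕ → List V
  | 0 => []
  | n + 1 =>
    let h := playAux w σ τ n
    (if (scores w h).1 ≤ (scores w h).2 then σ h else τ h) :: h

/-- The total weight `w(F)` collected by 1st at the end of the complete play
(all vertices taken) in which 1st plays `σ` and 2nd plays `τ`. -/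
noncomputable def firstScore (w : V → ℝ) (σ τ : List V → V) : ℝ :=
  (scores w (playAux w σ τ (Fintype.card V))).1

/-- 1st has a legal strategy collecting total weight at least `c` against
every legal strategy of 2nd. -/
def FirstGuarantees (G : SimpleGraph V) (w : V → ℝ) (c : ℝ) : Prop :=
  ∃ σ : List V → V, LegalStrategy G σ ∧
    ∀ τ : List V → V, LegalStrategy G τ → c ≤ firstScore w σ τ

/-- The value `v(G,w)`: the maximum total weight 1st can guarantee. -/
noncomputable def gameValue (G : SimpleGraph V) (w : V → ℝ) : ℝ :=
  sSup {c : ℝ | FirstGuarantees G w c}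

/-- `(G, w)` is an instance of the concurrent graph sharing game: `G` is
connected, the weights lie in `(0,1]` and sum to `1`, and no two distinct
subsets of vertices have the same total weight. -/
def IsGameInstance (G : SimpleGraph V) (w : V → ℝ) : Prop :=
  G.Connected ∧ (∀ v : V, 0 < w v ∧ w v ≤ 1) ∧ (∑ v : V, w v) = 1 ∧
    ∀ A B : Finset V, A ≠ B → ∑ a ∈ A, w a ≠ ∑ b ∈ B, w b

end ConcurrentSharing

/-!
The vertices `0`, `1`, `3` of the 7-cycle weigh about `1/3` each and the other four are negligible.
Since the player who is behind moves, a player without a heavy vertex keeps moving until he takes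
one, and between players with equally many heavy vertices the light weights decide who is to move.
The light weights are tuned so that, whatever 1st opens with, it is 2nd who gets the second heavy
vertex: he stays behind until he reaches it, or 1st is forced to overtake him while opening the way
to it. A strategy is certified by a finite tree of positions, which can be cut as soon as 2nd has
two heavy vertices.
-/

namespace ConcurrentSharing

section Game

variable {V : Type} {G : SimpleGraph V} {w : V → ℝ} {d : ℝ} {h : List V}
  {σ τ : List V → V} {n : ℕ}

instance [DecidableEq V] [DecidableRel G.Adj] (v : V) : Decidable (LegalMove G h v) :=
  inferInstanceAs (Decidable (_ ∧ (_ ∨ _)))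

theorem scores_fst_add_snd (w : V → ℝ) (h : List V) :
    (scores w h).1 + (scores w h).2 = (h.map w).sum := by
  induction h with
  | nil => simp [scores]
  | cons v h ih =>
    rw [List.map_cons, List.sum_cons, ← ih, scores]
    split_ifs <;> ring

theorem scores_fst_nonneg (hw : ∀ v, 0 ≤ w v) (h : List V) : 0 ≤ (scores w h).1 := by
  induction h with
  | nil => simp [scores]
  | cons v h ih =>
    rw [scores]
    split_ifs
    exacts [add_nonneg ih (hw v), ih]

theorem scores_snd_le_scores_cons_snd (hw : ∀ v, 0 ≤ w v) (v : V) (h : List V) :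
    (scores w h).2 ≤ (scores w (v :: h)).2 := by
  rw [scores]
  split_ifs
  exacts [le_rfl, le_add_of_nonneg_right (hw v)]

theorem exists_legalMove (hG : G.Preconnected) (hh : ∃ v, v ∉ h) : ∃ v, LegalMove G h v := by
  obtain ⟨v, hv⟩ := hh
  cases h with
  | nil => exact ⟨v, hv, .inl rfl⟩
  | cons u h =>
    obtain ⟨p⟩ := hG u v
    obtain ⟨e, -, he, he'⟩ := p.exists_boundary_dart {x | x ∈ u :: h} (by simp) hv
    exact ⟨e.snd, he', .inr ⟨e.fst, he, e.adj⟩⟩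

theorem legalMove_cons_of_adj {u v : V} (huv : G.Adj u v) (hv : v ∉ h) :
    LegalMove G (u :: h) v :=
  ⟨by simp [hv, huv.ne'], .inr ⟨u, by simp, huv⟩⟩

theorem exists_legalStrategy_of_preference [Nonempty V] (G : SimpleGraph V)
    (P : List V → V → Prop) :
    ∃ τ, LegalStrategy G τ ∧ ∀ h, (∃ v, LegalMove G h v ∧ P h v) → P h (τ h) := by
  have (h : List V) : ∃ v, ((∃ u, LegalMove G h u) → LegalMove G h v) ∧
      ((∃ u, LegalMove G h u ∧ P h u) → P h v) := by
    by_cases hP : ∃ u, LegalMove G h u ∧ P h u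
    · obtain ⟨u, hu, hPu⟩ := hP
      exact ⟨u, fun _ ↦ hu, fun _ ↦ hPu⟩
    · by_cases hL : ∃ u, LegalMove G h u
      · exact ⟨hL.choose, fun _ ↦ hL.choose_spec, fun h' ↦ absurd h' hP⟩
      · exact ⟨Classical.arbitrary V, fun h' ↦ absurd h' hL, fun h' ↦ absurd h' hP⟩
  choose τ hτ using this
  exact ⟨τ, fun h ↦ (hτ h).1, fun h ↦ (hτ h).2⟩

theorem length_playAux (w : V → ℝ) (σ τ : List V → V) (n : ℕ) :
    (playAux w σ τ n).length = n := by
  induction n with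
  | zero => rfl
  | succ n ih => rw [playAux, List.length_cons, ih]

theorem nodup_playAux [Fintype V] (hG : G.Preconnected) (hσ : LegalStrategy G σ)
    (hτ : LegalStrategy G τ) (hn : n ≤ Fintype.card V) : (playAux w σ τ n).Nodup := by
  induction n with
  | zero => exact List.nodup_nil
  | succ n ih =>
    have ⟨v, hv⟩ : ∃ v, v ∉ playAux w σ τ n := by
      by_contra! hall
      have := Fintype.card_le_of_surjective _ (List.get_surjective_iff.2 hall)
      rw [Fintype.card_fin, length_playAux] at this
      omega
    have hmove := exists_legalMove hG ⟨v, hv⟩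
    rw [playAux, List.nodup_cons]
    refine ⟨?_, ih (by omega)⟩
    split_ifs
    exacts [(hσ _ hmove).1, (hτ _ hmove).1]

theorem toFinset_playAux_card [Fintype V] [DecidableEq V] (hG : G.Preconnected)
    (hσ : LegalStrategy G σ) (hτ : LegalStrategy G τ) :
    (playAux w σ τ (Fintype.card V)).toFinset = Finset.univ := by
  rw [← Finset.card_eq_iff_eq_univ, List.toFinset_card_of_nodup (nodup_playAux hG hσ hτ le_rfl),
    length_playAux]

theorem scores_playAux_card_add [Fintype V] (hG : G.Preconnected) (hσ : LegalStrategy G σ)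
    (hτ : LegalStrategy G τ) :
    (scores w (playAux w σ τ (Fintype.card V))).1 +
      (scores w (playAux w σ τ (Fintype.card V))).2 = ∑ v, w v := by
  classical
  rw [scores_fst_add_snd, ← List.sum_toFinset w (nodup_playAux hG hσ hτ le_rfl),
    toFinset_playAux_card hG hσ hτ]

/-- `SecondForces G w d h f g`: with the vertices of `h` taken and the scores of 1st and 2nd being
`f` and `g`, 2nd can force a final score of at least `d`. The scores are parameters, rather than
computed from `h`, so that a strategy is checked without evaluating `scores`. -/
inductive SecondForces (G : SimpleGraph V) (w : V → ℝ) (d : ℝ) : List V → ℝ → ℝ → Prop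
  | reached {h : List V} {f g : ℝ} (hd : d ≤ g) : SecondForces G w d h f g
  | await {h : List V} {f g : ℝ} (hfg : f ≤ g) (hmove : ∃ v, LegalMove G h v)
      (hall : ∀ v, LegalMove G h v → SecondForces G w d (v :: h) (f + w v) g) :
      SecondForces G w d h f g
  | reply {h : List V} {f g : ℝ} (v : V) (hgf : g < f) (hv : LegalMove G h v)
      (hnext : SecondForces G w d (v :: h) f (g + w v)) : SecondForces G w d h f g

namespace SecondForces

theorem playAux_succ (hw : ∀ v, 0 ≤ w v) (hσ : LegalStrategy G σ)
    (hτ : ∀ h, (∃ v, LegalMove G h v ∧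
        SecondForces G w d (v :: h) (scores w (v :: h)).1 (scores w (v :: h)).2) →
      SecondForces G w d (τ h :: h) (scores w (τ h :: h)).1 (scores w (τ h :: h)).2)
    (hn : SecondForces G w d (playAux w σ τ n)
      (scores w (playAux w σ τ n)).1 (scores w (playAux w σ τ n)).2) :
    SecondForces G w d (playAux w σ τ (n + 1))
      (scores w (playAux w σ τ (n + 1))).1 (scores w (playAux w σ τ (n + 1))).2 := by
  rw [playAux]
  generalize playAux w σ τ n = h at hn ⊢
  cases hn with
  | reached hd => exact .reached (hd.trans (scores_snd_le_scores_cons_snd hw _ h))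
  | await hfg hmove hall =>
    simpa only [if_pos hfg, scores] using hall _ (hσ h hmove)
  | reply v hgf hv hnext =>
    rw [if_neg hgf.not_ge]
    exact hτ h ⟨v, hv, by simpa only [scores, if_neg hgf.not_ge] using hnext⟩

theorem le_of_forall_mem {f g : ℝ} (hF : SecondForces G w d h f g) (hh : ∀ v, v ∈ h) :
    d ≤ g := by
  cases hF with
  | reached hd => exact hd
  | await _ hmove _ => exact absurd (hh _) hmove.choose_spec.1
  | reply v _ hv _ => exact absurd (hh v) hv.1

theorem gameValue_le [Fintype V] (hG : G.Connected) (hw : ∀ v, 0 ≤ w v)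
    (hF : SecondForces G w d [] 0 0) : gameValue G w ≤ (∑ v, w v) - d := by
  classical
  have := hG.nonempty
  obtain ⟨τ, hτ, hfollow⟩ := exists_legalStrategy_of_preference G fun h v ↦
    SecondForces G w d (v :: h) (scores w (v :: h)).1 (scores w (v :: h)).2
  have hbound {σ : List V → V} (hσ : LegalStrategy G σ) : firstScore w σ τ ≤ (∑ v, w v) - d := by
    have hplay (n : ℕ) : SecondForces G w d (playAux w σ τ n)
        (scores w (playAux w σ τ n)).1 (scores w (playAux w σ τ n)).2 := by
      induction n with
      | zero => exact hF
      | succ n ih => exact ih.playAux_succ hw hσ hfollow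
    have hsum := scores_playAux_card_add (w := w) hG.preconnected hσ hτ
    have hd : d ≤ (scores w (playAux w σ τ (Fintype.card V))).2 :=
      (hplay _).le_of_forall_mem fun v ↦ by
        rw [← List.mem_toFinset, toFinset_playAux_card hG.preconnected hσ hτ]
        exact Finset.mem_univ v
    rw [firstScore]
    linarith
  refine csSup_le ⟨0, τ, hτ, fun _ _ ↦ scores_fst_nonneg hw _⟩ ?_
  rintro c ⟨σ, hσ, hc⟩
  exact (hc τ hτ).trans (hbound hσ)

theorem await_pair {f g : ℝ} (u v : V) (hfg : f ≤ g)
    (hmoves : ∀ x, LegalMove G h x ↔ x = u ∨ x = v)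
    (hu : SecondForces G w d (u :: h) (f + w u) g)
    (hv : SecondForces G w d (v :: h) (f + w v) g) : SecondForces G w d h f g := by
  refine .await hfg ⟨u, (hmoves u).2 (.inl rfl)⟩ fun x hx ↦ ?_
  rcases (hmoves x).1 hx with rfl | rfl
  exacts [hu, hv]

/-- 1st has to keep moving until he enters `{a, b}`; he is then ahead, so 2nd takes the other of the
two. As 1st can enter `a` only through `s`, and `b` only through `p`, that vertex is by then taken,
and counts for him unless it was taken before. -/
theorem of_adj_pair {a b p s : V} {f g : ℝ} {U : Finset V} [DecidableEq V] (hw : ∀ v, 0 ≤ w v)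
    (hG : G.Preconnected) (hab : G.Adj a b) (hne : h ≠ []) (ha : a ∉ h) (hb : b ∉ h)
    (hna : ∀ y, G.Adj y a → y = b ∨ y = s) (hnb : ∀ y, G.Adj y b → y = a ∨ y = p)
    (hU : ∀ v, v ∉ h → v = a ∨ v = b ∨ v ∈ U) (hlead : f + ∑ v ∈ U, w v ≤ g)
    (hfa : g < f + (if s ∈ h then 0 else w s) + w a)
    (hfb : g < f + (if p ∈ h then 0 else w p) + w b)
    (hda : d ≤ g + w a) (hdb : d ≤ g + w b) : SecondForces G w d h f g := by
  induction U using Finset.strongInduction generalizing h f with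
  | H U ih =>
    have hfg : f ≤ g := (le_add_of_nonneg_right (Finset.sum_nonneg fun v _ ↦ hw v)).trans hlead
    refine .await hfg (exists_legalMove hG ⟨a, ha⟩) fun v hv ↦ ?_
    obtain ⟨hvh, hvadj⟩ := hv
    obtain ⟨u, huh, huv⟩ := hvadj.resolve_left hne
    by_cases hva : v = a
    · subst hva
      have hus : u = s := (hna u huv).resolve_left (by rintro rfl; exact hb huh)
      rw [← hus, if_pos huh, add_zero] at hfa
      exact .reply b hfa (legalMove_cons_of_adj hab hb) (.reached hdb)
    by_cases hvb : v = b
    · subst hvb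
      have hup : u = p := (hnb u huv).resolve_left (by rintro rfl; exact ha huh)
      rw [← hup, if_pos huh, add_zero] at hfb
      exact .reply a hfb (legalMove_cons_of_adj hab.symm ha) (.reached hda)
    have hvU : v ∈ U := ((hU v hvh).resolve_left hva).resolve_left hvb
    have hguard (x : V) : f + (if x ∈ h then 0 else w x) ≤
        f + w v + if x ∈ v :: h then 0 else w x := by
      rcases eq_or_ne x v with rfl | hxv
      · simp [hvh]
      · simpa [hxv, add_right_comm f] using hw v
    refine ih (U.erase v) (Finset.erase_ssubset hvU) (by simp) (by simp [ha, Ne.symm hva])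
      (by simp [hb, Ne.symm hvb]) (fun x hx ↦ ?_) ?_ ?_ ?_
    · simp only [List.mem_cons, not_or] at hx
      simpa [hx.1] using hU x hx.2
    · rwa [add_assoc, Finset.add_sum_erase _ _ hvU]
    · linarith [hguard s]
    · linarith [hguard p]

end SecondForces

end Game

theorem eq_and_eq_of_mul_add_mul_eq {m n k l K L : ℤ} {t δ : ℝ} (hk : |k| ≤ K) (hl : |l| ≤ L)
    (hδ : 0 < δ) (hδt : (K + L : ℤ) * δ < t) (h : m * t + k * δ = n * t + l * δ) :
    m = n ∧ k = l := by
  have hlk : |((l - k : ℤ) : ℝ)| ≤ (K + L : ℤ) := by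
    exact_mod_cast (abs_sub l k).trans (by linarith)
  have ht : 0 < t := (mul_nonneg ((abs_nonneg _).trans hlk) hδ.le).trans_lt hδt
  have hdiff : ((m - n : ℤ) : ℝ) * t = (l - k : ℤ) * δ := by
    push_cast
    linear_combination h
  have hmn : |m - n| < 1 := by
    rw [← Int.cast_lt (R := ℝ), Int.cast_abs, Int.cast_one, ← mul_lt_mul_iff_of_pos_right ht]
    calc |((m - n : ℤ) : ℝ)| * t = |((l - k : ℤ) : ℝ)| * δ := by
          simpa only [abs_mul, abs_of_pos ht, abs_of_pos hδ] using congrArg abs hdiff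
      _ ≤ (K + L : ℤ) * δ := by gcongr
      _ < 1 * t := by rwa [one_mul]
  obtain rfl : m = n := sub_eq_zero.1 (Int.abs_lt_one_iff.1 hmn)
  exact ⟨rfl, by exact_mod_cast mul_right_cancel₀ hδ.ne' (add_left_cancel h)⟩

section SevenCycle

variable {w : Fin 7 → ℝ} {d δ : ℝ}

local notation "C₇" => SimpleGraph.cycleGraph 7

theorem secondForces_after_zero (hw : ∀ v, 0 < w v) (h56 : w 5 + w 6 < w 0)
    (h156 : w 0 ≤ w 1 + w 5 + w 6) (h4 : w 1 + w 5 + w 6 < w 0 + w 4)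
    (h2 : w 1 + w 5 + w 6 < w 0 + w 2) (hd : d ≤ w 1 + w 3) :
    SecondForces C₇ w d [0] (w 0) 0 := by
  refine .reply 6 (hw 0) (by decide) <| .reply 5 (by linarith [hw 5]) (by decide) <|
    .reply 1 (by linarith) (by decide) <| .await_pair 4 2 (by linarith) (by decide) ?_ ?_
  all_goals
    exact .reply 3 (by linarith) (by decide) <| .reached (by linarith [hw 5, hw 6])

theorem secondForces_after_one (hw : ∀ v, 0 < w v) (h10 : w 1 ≤ w 0) (h6 : w 0 < w 1 + w 6)
    (h5 : w 1 + w 6 ≤ w 0 + w 5) (h46 : w 0 + w 5 < w 1 + w 4 + w 6)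
    (h26 : w 0 + w 5 < w 1 + w 2 + w 6) (h2 : w 0 < w 1 + w 2) (hd : d ≤ w 0 + w 3) :
    SecondForces C₇ w d [1] (w 1) 0 := by
  refine .reply 0 (hw 1) (by decide) <| .await_pair 6 2 (by linarith) (by decide) ?_ ?_
  · refine .reply 5 (by linarith) (by decide) <| .await_pair 4 2 (by linarith) (by decide) ?_ ?_
    all_goals
      exact .reply 3 (by linarith) (by decide) <| .reached (by linarith [hw 5])
  · exact .reply 3 (by linarith) (by decide) <| .reached (by linarith)

theorem secondForces_after_two (hw : ∀ v, 0 < w v) (h21 : w 2 ≤ w 1) (h0 : w 1 < w 0 + w 2)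
    (h3 : w 1 < w 2 + w 3) (hd0 : d ≤ w 0 + w 1) (hd3 : d ≤ w 1 + w 3) :
    SecondForces C₇ w d [2] (w 2) 0 := by
  refine .reply 1 (hw 2) (by decide) <| .await_pair 0 3 (by linarith) (by decide) ?_ ?_
  · exact .reply 3 (by linarith) (by decide) <| .reached (by linarith)
  · exact .reply 0 (by linarith) (by decide) <| .reached (by linarith)

theorem secondForces_after_three (hw : ∀ v, 0 < w v) (h12 : w 1 + w 2 < w 3)
    (hd : d ≤ w 0 + w 1) : SecondForces C₇ w d [3] (w 3) 0 :=
  .reply 2 (hw 3) (by decide) <| .reply 1 (by linarith [hw 1]) (by decide) <|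
    .reply 0 (by linarith) (by decide) <| .reached (by linarith [hw 2])

theorem secondForces_after_four (hw : ∀ v, 0 < w v) (hlead : w 2 + w 4 + w 5 + w 6 ≤ w 3)
    (h0 : w 3 < w 0 + w 4 + w 6) (h1 : w 3 < w 1 + w 2 + w 4) (hd0 : d ≤ w 0 + w 3)
    (hd1 : d ≤ w 1 + w 3) : SecondForces C₇ w d [4] (w 4) 0 := by
  refine .reply 3 (hw 4) (by decide) <|
    .of_adj_pair (a := 0) (b := 1) (s := 6) (p := 2) (U := {2, 5, 6}) (fun v ↦ (hw v).le)
      SimpleGraph.cycleGraph_preconnected (by decide) (by decide) (by decide) (by decide)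
      (by decide) (by decide) (by decide) ?_ ?_ ?_ ?_ ?_
  all_goals simp only [Finset.mem_insert, Finset.mem_singleton, Finset.sum_insert,
    Finset.sum_singleton, List.mem_cons, List.not_mem_nil, Fin.reduceEq, or_self,
    not_false_eq_true, ↓reduceIte, zero_add]
  all_goals linarith

theorem secondForces_after_five (hw : ∀ v, 0 < w v) (h54 : w 5 ≤ w 4)
    (h3 : w 1 + w 2 + w 4 < w 3 + w 5)
    (hlead : w 2 + w 5 + w 6 ≤ w 3 + w 4) (h06 : w 3 + w 4 < w 0 + w 5 + w 6)
    (h26 : w 3 + w 4 < w 1 + w 2 + w 5 + w 6) (hd01 : d ≤ w 0 + w 1) (hd03 : d ≤ w 0 + w 3)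
    (hd13 : d ≤ w 1 + w 3) : SecondForces C₇ w d [5] (w 5) 0 := by
  refine .reply 4 (hw 5) (by decide) <| .await_pair 3 6 (by linarith) (by decide) ?_ ?_
  · exact .reply 2 (by linarith [hw 1, hw 2]) (by decide) <|
      .reply 1 (by linarith [hw 1]) (by decide) <|
      .reply 0 (by linarith) (by decide) <| .reached (by linarith [hw 2, hw 4])
  · refine .reply 3 (by linarith) (by decide) <|
      .of_adj_pair (a := 0) (b := 1) (s := 6) (p := 2) (U := {2}) (fun v ↦ (hw v).le)
        SimpleGraph.cycleGraph_preconnected (by decide) (by decide) (by decide) (by decide)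
        (by decide) (by decide) (by decide) ?_ ?_ ?_ ?_ ?_
    all_goals simp only [Finset.sum_singleton, List.mem_cons, List.not_mem_nil, Fin.reduceEq,
      or_self, or_false, or_true, ↓reduceIte, zero_add, add_zero]
    all_goals linarith [hw 4]

theorem secondForces_after_six (hw : ∀ v, 0 < w v) (h56 : w 5 < w 6) (h45 : w 6 ≤ w 4 + w 5)
    (h3 : w 0 + w 4 + w 5 < w 3 + w 6) (h0 : w 1 + w 4 + w 5 < w 0 + w 6)
    (hd01 : d ≤ w 0 + w 1) : SecondForces C₇ w d [6] (w 6) 0 := by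
  refine .reply 5 (hw 6) (by decide) <| .reply 4 (by linarith) (by decide) <|
    .await_pair 3 0 (by linarith) (by decide) ?_ ?_
  · exact .reply 0 (by linarith [hw 0]) (by decide) <| .reply 1 (by linarith) (by decide) <|
      .reached (by linarith [hw 4, hw 5])
  · exact .reply 1 (by linarith [hw 1]) (by decide) <| .reply 3 (by linarith) (by decide) <|
      .reached (by linarith [hw 4, hw 5])

/-- The indicator of the heavy vertices, those of limiting weight `1/3`. -/
def heavy : Fin 7 → ℤ := ![1, 1, 0, 1, 0, 0, 0]

/-- The deviation of a weight from its limit, `1/3` or `0`, in units of `δ`. The entries sum to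
zero and solve the inequalities assumed in `secondForces_after_zero`, …,
`secondForces_after_six`. -/
def offset : Fin 7 → ℤ := ![-17, -34, 18, -7, 14, 7, 19]

/-- The weights of the instance, with a small parameter `δ`. -/
noncomputable def weight (δ : ℝ) (v : Fin 7) : ℝ :=
  heavy v / 3 + offset v * δ

theorem weight_eq (δ : ℝ) : weight δ =
    ![1 / 3 - 17 * δ, 1 / 3 - 34 * δ, 18 * δ, 1 / 3 - 7 * δ, 14 * δ, 7 * δ, 19 * δ] := by
  ext v
  fin_cases v <;> simp [weight, heavy, offset] <;> ring

theorem weight_pos (hδ : 0 < δ) (hδ' : δ < 1 / 102) (v : Fin 7) : 0 < weight δ v := by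
  have hcases : heavy v = 0 ∧ 0 < offset v ∨ heavy v = 1 ∧ -34 ≤ offset v := by decide +revert
  rcases hcases with ⟨hlight, hoff⟩ | ⟨hheavy, hoff⟩
  · have : (0 : ℝ) < offset v := by exact_mod_cast hoff
    rw [weight, hlight, Int.cast_zero, zero_div, zero_add]
    positivity
  · have : (-34 : ℝ) ≤ offset v := by exact_mod_cast hoff
    rw [weight, hheavy, Int.cast_one]
    nlinarith

theorem sum_weight (δ : ℝ) (A : Finset (Fin 7)) :
    ∑ v ∈ A, weight δ v = ↑(∑ v ∈ A, heavy v) / 3 + ↑(∑ v ∈ A, offset v) * δ := by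
  simp only [weight, Finset.sum_add_distrib, ← Finset.sum_div, ← Finset.sum_mul, Int.cast_sum]

theorem sum_univ_weight (δ : ℝ) : ∑ v, weight δ v = 1 := by
  have hheavy : ∑ v, heavy v = 3 := by decide
  have hoffset : ∑ v, offset v = 0 := by decide
  rw [sum_weight, hheavy, hoffset]
  norm_num

theorem secondForces_weight (hδ : 0 < δ) (hδ' : δ < 1 / 348) :
    SecondForces C₇ (weight δ) (2 / 3 - 51 * δ) [] 0 0 := by
  have hw := weight_pos hδ (by linarith)
  have h0 : weight δ 0 = 1 / 3 - 17 * δ := by simp [weight_eq]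
  have h1 : weight δ 1 = 1 / 3 - 34 * δ := by simp [weight_eq]
  have h2 : weight δ 2 = 18 * δ := by simp [weight_eq]
  have h3 : weight δ 3 = 1 / 3 - 7 * δ := by simp [weight_eq]
  have h4 : weight δ 4 = 14 * δ := by simp [weight_eq]
  have h5 : weight δ 5 = 7 * δ := by simp [weight_eq]
  have h6 : weight δ 6 = 19 * δ := by simp [weight_eq]
  refine .await le_rfl ⟨0, by decide⟩ fun v _ ↦ ?_
  rw [zero_add]
  fin_cases v
  · apply secondForces_after_zero hw <;> linarith
  · apply secondForces_after_one hw <;> linarith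
  · apply secondForces_after_two hw <;> linarith
  · apply secondForces_after_three hw <;> linarith
  · apply secondForces_after_four hw <;> linarith
  · apply secondForces_after_five hw <;> linarith
  · apply secondForces_after_six hw <;> linarith

theorem sum_heavy_offset_injective : Function.Injective fun A : Finset (Fin 7) ↦
    (∑ v ∈ A, heavy v, ∑ v ∈ A, offset v) := by
  decide +kernel

theorem abs_sum_offset_le (A : Finset (Fin 7)) : |∑ v ∈ A, offset v| ≤ 58 := by
  decide +revert +kernel

theorem sum_weight_injective (hδ : 0 < δ) (hδ' : δ < 1 / 348) :
    Function.Injective fun A : Finset (Fin 7) ↦ ∑ v ∈ A, weight δ v := by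
  intro A B hAB
  simp only [sum_weight, div_eq_mul_inv] at hAB
  have hsmall : ((58 + 58 : ℤ) : ℝ) * δ < 3⁻¹ := by norm_num; linarith
  exact sum_heavy_offset_injective <| Prod.ext_iff.2 <|
    eq_and_eq_of_mul_add_mul_eq (abs_sum_offset_le A) (abs_sum_offset_le B) hδ hsmall hAB

theorem isGameInstance_weight (hδ : 0 < δ) (hδ' : δ < 1 / 348) :
    IsGameInstance C₇ (weight δ) := by
  have hpos := weight_pos hδ (by linarith)
  refine ⟨SimpleGraph.cycleGraph_connected, fun v ↦ ⟨hpos v, ?_⟩, sum_univ_weight δ,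
    fun A B hAB ↦ (sum_weight_injective hδ hδ').ne hAB⟩
  rw [← sum_univ_weight δ]
  exact Finset.single_le_sum (fun u _ ↦ (hpos u).le) (Finset.mem_univ v)

end SevenCycle

end ConcurrentSharing

open ConcurrentSharing in
/-- For every `ε > 0` there exists an instance `(G,w)` of the
concurrent graph sharing game with `G` a cycle such that `v(G,w) ≤ 1/3 + ε`. -/
theorem exists_cycle_instance_value_le (ε : ℝ) (hε : 0 < ε) :
    ∃ (n : ℕ) (w : Fin n → ℝ), 3 ≤ n ∧
      IsGameInstance (SimpleGraph.cycleGraph n) w ∧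
      gameValue (SimpleGraph.cycleGraph n) w ≤ 1 / 3 + ε := by
  obtain ⟨δ, hδ, hδε⟩ := exists_between (show 0 < min (1 / 348) (ε / 51) by positivity)
  obtain ⟨hδ', hε'⟩ := lt_min_iff.1 hδε
  refine ⟨7, weight δ, by norm_num, isGameInstance_weight hδ hδ', ?_⟩
  calc gameValue (SimpleGraph.cycleGraph 7) (weight δ)
      ≤ (∑ v, weight δ v) - (2 / 3 - 51 * δ) :=
        (secondForces_weight hδ hδ').gameValue_le SimpleGraph.cycleGraph_connected
          fun v ↦ (weight_pos hδ (by linarith) v).le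
    _ = 1 / 3 + 51 * δ := by rw [sum_univ_weight]; ring
    _ ≤ 1 / 3 + ε := by linarith
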